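/- Under MAR for both periods (Y_t ⊥ R_t | X, A and γ_t(X,a) = P(R_t=1 | X, A=a) ∈ (0,1) a.s. for t ∈ {0,1}), together with conditional parallel trends, consistency, and positivity, the ATT is identified as θ* = E[(A/E[A])·(E[Y1 | X, A=1, R1=1] - E[Y0 | X, A=1, R0=1] - E[Y1 | X, A=0, R1=1] + E[Y0 | X, A=0, R0=1])]. -/

import Mathlib

/-!
Missingness at random makes the regression function of an outcome within a treatment arm also a
regression function among the observed units of that arm, so the two agree wherever observed units
occur, and by overlap on the whole arm. Among controls, the difference of the two regressions is
then the trend of the untreated outcome; overlap in treatment transports it to the treated, where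
parallel trends identifies it with the unobserved counterfactual trend.
-/

open MeasureTheory

/-- `m ∘ X` is a version of the conditional expectation `E[Y ∣ X]` restricted to the
event `E` (i.e. a version of `E[Y ∣ X, E]`). -/
def IsCondExpOn {Ω 𝒳 : Type*} [MeasurableSpace Ω] [MeasurableSpace 𝒳]
    (μ : MeasureTheory.Measure Ω) (X : Ω → 𝒳) (E : Set Ω) (Y : Ω → ℝ) (m : 𝒳 → ℝ) : Prop :=
  Measurable m ∧ ∀ s : Set 𝒳, MeasurableSet s →
    ∫ ω in E ∩ X ⁻¹' s, Y ω ∂μ = ∫ ω in E ∩ X ⁻¹' s, m (X ω) ∂μ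

section Binary

variable {Ω : Type*} [MeasurableSpace Ω] {μ : Measure Ω} {R : Ω → ℝ}

theorem integrable_of_binary [IsFiniteMeasure μ] (hR : Measurable R)
    (hRbin : ∀ ω, R ω = 0 ∨ R ω = 1) : Integrable R μ := by
  refine Integrable.of_bound (C := 1) hR.aestronglyMeasurable (ae_of_all _ fun ω => ?_)
  rcases hRbin ω with h | h <;> simp [h]

theorem setIntegral_mul_binary (hR : Measurable R) (hRbin : ∀ ω, R ω = 0 ∨ R ω = 1)
    (f : Ω → ℝ) (s : Set Ω) :
    ∫ ω in s, f ω * R ω ∂μ = ∫ ω in s ∩ {ω | R ω = 1}, f ω ∂μ := by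
  have hmul : (fun ω => f ω * R ω) = {ω | R ω = 1}.indicator f := by
    ext ω
    rcases hRbin ω with h | h <;> simp [Set.indicator, h]
  have hR1 : MeasurableSet {ω | R ω = 1} := hR (measurableSet_singleton 1)
  rw [hmul, setIntegral_indicator hR1]

end Binary

namespace IsCondExpOn

variable {Ω 𝒳 : Type*} [mΩ : MeasurableSpace Ω] [m𝒳 : MeasurableSpace 𝒳] {μ : Measure Ω}
  {X : Ω → 𝒳} {E : Set Ω} {Y Y' : Ω → ℝ} {m m' : 𝒳 → ℝ}

theorem const (c : ℝ) : IsCondExpOn μ X E (fun _ => c) (fun _ => c) :=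
  ⟨measurable_const, fun _ _ => rfl⟩

theorem setIntegral_eq (h : IsCondExpOn μ X E Y m) :
    ∫ ω in E, Y ω ∂μ = ∫ ω in E, m (X ω) ∂μ := by
  simpa using h.2 Set.univ MeasurableSet.univ

theorem inter_preimage (h : IsCondExpOn μ X E Y m) {t : Set 𝒳} (ht : MeasurableSet t) :
    IsCondExpOn μ X (E ∩ X ⁻¹' t) Y m := by
  refine ⟨h.1, fun s hs => ?_⟩
  rw [Set.inter_assoc, ← Set.preimage_inter]
  exact h.2 _ (ht.inter hs)

theorem congr_ae (h : IsCondExpOn μ X E Y m) (hY : Y =ᵐ[μ.restrict E] Y') :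
    IsCondExpOn μ X E Y' m := by
  refine ⟨h.1, fun s hs => Eq.trans ?_ (h.2 s hs)⟩
  exact integral_congr_ae (ae_restrict_of_ae_restrict_of_subset Set.inter_subset_left hY.symm)

theorem congr_version (h : IsCondExpOn μ X E Y m) (hm' : Measurable m')
    (hmm' : ∀ᵐ ω ∂μ.restrict E, m (X ω) = m' (X ω)) : IsCondExpOn μ X E Y m' := by
  refine ⟨hm', fun s hs => (h.2 s hs).trans ?_⟩
  exact integral_congr_ae (ae_restrict_of_ae_restrict_of_subset Set.inter_subset_left hmm')

variable [IsFiniteMeasure μ]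

theorem of_ae_eq_condExp (hX : Measurable X) (hY : IntegrableOn Y E μ) (hm : Measurable m)
    (h : (fun ω => m (X ω)) =ᵐ[μ.restrict E] (μ.restrict E)[Y | m𝒳.comap X]) :
    IsCondExpOn μ X E Y m := by
  refine ⟨hm, fun s hs => ?_⟩
  rw [Set.inter_comm, ← Measure.restrict_restrict (hX hs),
    integral_congr_ae (ae_restrict_of_ae h), setIntegral_condExp hX.comap_le hY ⟨s, hs, rfl⟩]

theorem ae_eq_condExp_of_integrableOn (hX : Measurable X) (hY : IntegrableOn Y E μ)
    (h : IsCondExpOn μ X E Y m) (hm : IntegrableOn (fun ω => m (X ω)) E μ) :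
    (fun ω => m (X ω)) =ᵐ[μ.restrict E] (μ.restrict E)[Y | m𝒳.comap X] := by
  refine ae_eq_condExp_of_forall_setIntegral_eq hX.comap_le hY (fun _ _ _ => hm.integrableOn) ?_
    (h.1.comp (comap_measurable X)).aestronglyMeasurable
  rintro _ ⟨s, hs, rfl⟩ -
  rw [Measure.restrict_restrict (hX hs), Set.inter_comm, h.2 s hs]

-- A version is not assumed integrable, so it is compared with `condExp` where it is bounded by `n`.
theorem ae_eq_condExp (hX : Measurable X) (hY : IntegrableOn Y E μ) (h : IsCondExpOn μ X E Y m) :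
    (fun ω => m (X ω)) =ᵐ[μ.restrict E] (μ.restrict E)[Y | m𝒳.comap X] := by
  let t (n : ℕ) : Set 𝒳 := {x | |m x| ≤ n}
  have ht (n : ℕ) : MeasurableSet (t n) := measurableSet_le h.1.abs measurable_const
  have ht_univ : ⋃ n, t n = Set.univ := Set.iUnion_eq_univ_iff.2 fun x => exists_nat_ge |m x|
  have hcover : ⋃ n, E ∩ X ⁻¹' t n = E := by
    rw [← Set.inter_iUnion, ← Set.preimage_iUnion, ht_univ, Set.preimage_univ, Set.inter_univ]
  have hbounded (n : ℕ) : IntegrableOn (fun ω => m (X ω)) (E ∩ X ⁻¹' t n) μ := by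
    refine Integrable.of_bound (C := n) (h.1.comp hX).aestronglyMeasurable ?_
    rw [Set.inter_comm, ← Measure.restrict_restrict (hX (ht n))]
    exact ae_restrict_mem (hX (ht n))
  have htrunc (n : ℕ) : ∀ᵐ ω ∂μ.restrict (E ∩ X ⁻¹' t n),
      m (X ω) = ((μ.restrict E)[Y | m𝒳.comap X]) ω := by
    have hversion := (h.inter_preimage (ht n)).ae_eq_condExp_of_integrableOn hX
      (hY.mono_set Set.inter_subset_left) (hbounded n)
    rw [Set.inter_comm, ← Measure.restrict_restrict (hX (ht n))] at hversion ⊢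
    exact hversion.trans (condExp_restrict_ae_eq_restrict hX.comap_le ⟨t n, ht n, rfl⟩ hY)
  have hunion := (ae_restrict_iUnion_iff _ _).2 htrunc
  rwa [hcover] at hunion

theorem ae_eq (hX : Measurable X) (hY : IntegrableOn Y E μ) (h : IsCondExpOn μ X E Y m)
    (h' : IsCondExpOn μ X E Y m') : ∀ᵐ ω ∂μ.restrict E, m (X ω) = m' (X ω) :=
  (h.ae_eq_condExp hX hY).trans (h'.ae_eq_condExp hX hY).symm

theorem integrableOn (hX : Measurable X) (hY : IntegrableOn Y E μ) (h : IsCondExpOn μ X E Y m) :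
    IntegrableOn (fun ω => m (X ω)) E μ :=
  integrable_condExp.congr (h.ae_eq_condExp hX hY).symm

theorem sub (hX : Measurable X) (hY : IntegrableOn Y E μ) (hY' : IntegrableOn Y' E μ)
    (h : IsCondExpOn μ X E Y m) (h' : IsCondExpOn μ X E Y' m') :
    IsCondExpOn μ X E (fun ω => Y ω - Y' ω) (fun x => m x - m' x) :=
  of_ae_eq_condExp hX (hY.sub hY') (h.1.sub h'.1) <|
    ((h.ae_eq_condExp hX hY).sub (h'.ae_eq_condExp hX hY')).trans (condExp_sub hY hY' _).symm

theorem comp_mul (hX : Measurable X) (hY : IntegrableOn Y E μ) (h : IsCondExpOn μ X E Y m)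
    {f : 𝒳 → ℝ} (hf : Measurable f) (hfY : IntegrableOn (fun ω => f (X ω) * Y ω) E μ) :
    IsCondExpOn μ X E (fun ω => f (X ω) * Y ω) (fun x => f x * m x) := by
  have hfX : StronglyMeasurable[m𝒳.comap X] (fun ω => f (X ω)) :=
    (hf.comp (comap_measurable X)).stronglyMeasurable
  exact of_ae_eq_condExp hX hfY (hf.mul h.1) <|
    (Filter.EventuallyEq.rfl.mul (h.ae_eq_condExp hX hY)).trans
      (condExp_mul_of_stronglyMeasurable_left hfX hfY hY).symm

-- On the part of `E` where `X ∉ t`, the weight `W` vanishes, hence so does its regression `w`.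
theorem ae_mem_of_weight_ne_zero (hX : Measurable X) {W : Ω → ℝ} {w : 𝒳 → ℝ}
    (h : IsCondExpOn μ X E W w) (hw : ∀ᵐ ω ∂μ.restrict E, w (X ω) ≠ 0)
    {t : Set 𝒳} (ht : MeasurableSet t)
    (hWt : ∀ᵐ ω ∂μ.restrict E, W ω ≠ 0 → X ω ∈ t) : ∀ᵐ ω ∂μ.restrict E, X ω ∈ t := by
  have hrestrict : μ.restrict (E ∩ X ⁻¹' tᶜ) = (μ.restrict E).restrict (X ⁻¹' tᶜ) := by
    rw [Measure.restrict_restrict (hX ht.compl), Set.inter_comm]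
  have hW0 : ∀ᵐ ω ∂μ.restrict (E ∩ X ⁻¹' tᶜ), W ω = 0 := by
    rw [hrestrict, ae_restrict_iff' (hX ht.compl)]
    filter_upwards [hWt] with ω hω hωt
    exact not_imp_comm.1 hω hωt
  have hw0 : ∀ᵐ ω ∂μ.restrict (E ∩ X ⁻¹' tᶜ), w (X ω) = 0 :=
    ((h.inter_preimage ht.compl).congr_ae hW0).ae_eq hX integrableOn_zero (const 0)
  rw [hrestrict, ae_restrict_iff' (hX ht.compl)] at hw0
  filter_upwards [hw0, hw] with ω hω0 hω
  exact not_imp_comm.1 hω0 hω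

end IsCondExpOn

/-- The outcome `Y` is missing at random given `X` within the event `E`, `R` being its observation
indicator: some version `γ` of `P(R = 1 ∣ X, E)` is positive and `E[Y R ∣ X, E]` factors as
`E[Y ∣ X, E] * γ`. This product rule is the only consequence of `Y ⊥ R ∣ X, E` that is recorded. -/
def MissingAtRandomOn {Ω 𝒳 : Type*} [MeasurableSpace Ω] [MeasurableSpace 𝒳]
    (μ : Measure Ω) (X : Ω → 𝒳) (E : Set Ω) (Y R : Ω → ℝ) : Prop :=
  ∃ γ mf : 𝒳 → ℝ, IsCondExpOn μ X E R γ ∧ (∀ᵐ ω ∂μ.restrict E, 0 < γ (X ω)) ∧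
    IsCondExpOn μ X E Y mf ∧ IsCondExpOn μ X E (fun ω => Y ω * R ω) (fun x => mf x * γ x)

section CompleteCase

variable {Ω 𝒳 : Type*} [MeasurableSpace Ω] [MeasurableSpace 𝒳] {μ : Measure Ω}
  [IsFiniteMeasure μ] {X : Ω → 𝒳} {E : Set Ω} {Y R : Ω → ℝ} {m γ mf : 𝒳 → ℝ}

theorem IsCondExpOn.inter_observed (hX : Measurable X) (hY : IntegrableOn Y E μ)
    (hR : Measurable R) (hRbin : ∀ ω, R ω = 0 ∨ R ω = 1) (hmf : IsCondExpOn μ X E Y mf)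
    (hγ : IsCondExpOn μ X E R γ)
    (hprod : IsCondExpOn μ X E (fun ω => Y ω * R ω) (fun x => mf x * γ x)) :
    IsCondExpOn μ X (E ∩ {ω | R ω = 1}) Y mf := by
  have hmfR : IntegrableOn (fun ω => mf (X ω) * R ω) E μ := by
    refine (hmf.integrableOn hX hY).mul_bdd (c := 1) hR.aestronglyMeasurable
      (ae_of_all _ fun ω => ?_)
    rcases hRbin ω with h | h <;> simp [h]
  have hpull := hγ.comp_mul hX (integrable_of_binary hR hRbin) hmf.1 hmfR
  refine ⟨hmf.1, fun s hs => ?_⟩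
  calc ∫ ω in E ∩ {ω | R ω = 1} ∩ X ⁻¹' s, Y ω ∂μ
      = ∫ ω in E ∩ X ⁻¹' s, Y ω * R ω ∂μ := by
        rw [setIntegral_mul_binary hR hRbin, Set.inter_right_comm]
    _ = ∫ ω in E ∩ X ⁻¹' s, mf (X ω) * γ (X ω) ∂μ := hprod.2 s hs
    _ = ∫ ω in E ∩ X ⁻¹' s, mf (X ω) * R ω ∂μ := (hpull.2 s hs).symm
    _ = ∫ ω in E ∩ {ω | R ω = 1} ∩ X ⁻¹' s, mf (X ω) ∂μ := by
        rw [setIntegral_mul_binary hR hRbin, Set.inter_right_comm]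

theorem MissingAtRandomOn.isCondExpOn_of_observed (hX : Measurable X) (hY : IntegrableOn Y E μ)
    (hR : Measurable R) (hRbin : ∀ ω, R ω = 0 ∨ R ω = 1) (h : MissingAtRandomOn μ X E Y R)
    (hm : IsCondExpOn μ X (E ∩ {ω | R ω = 1}) Y m) : IsCondExpOn μ X E Y m := by
  obtain ⟨γ, mf, hγ, hγpos, hmf, hprod⟩ := h
  have hR1 : MeasurableSet {ω | R ω = 1} := hR (measurableSet_singleton 1)
  have hobserved : ∀ᵐ ω ∂μ.restrict (E ∩ {ω | R ω = 1}), mf (X ω) = m (X ω) :=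
    (hmf.inter_observed hX hY hR hRbin hγ hprod).ae_eq hX (hY.mono_set Set.inter_subset_left) hm
  rw [Set.inter_comm, ← Measure.restrict_restrict hR1, ae_restrict_iff' hR1] at hobserved
  refine hmf.congr_version hm.1 <| hγ.ae_mem_of_weight_ne_zero hX
    (hγpos.mono fun _ h => h.ne') (measurableSet_eq_fun hmf.1 hm.1) ?_
  filter_upwards [hobserved] with ω hω hRω
  exact hω ((hRbin ω).resolve_left hRω)

end CompleteCase

section DifferenceInDifferences

variable {Ω 𝒳 : Type*} [MeasurableSpace Ω] [MeasurableSpace 𝒳] {μ : Measure Ω}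
  [IsFiniteMeasure μ] {X : Ω → 𝒳} {A : Ω → ℝ}

theorem IsCondExpOn.treated_of_control {D : Ω → ℝ} {m m' π : 𝒳 → ℝ} (hX : Measurable X)
    (hA : Measurable A) (hAbin : ∀ ω, A ω = 0 ∨ A ω = 1) (hD : IntegrableOn D {ω | A ω = 0} μ)
    (hm : IsCondExpOn μ X {ω | A ω = 0} D m) (hm' : IsCondExpOn μ X {ω | A ω = 0} D m')
    (hm'_treated : IsCondExpOn μ X {ω | A ω = 1} D m') (hπ : IsCondExpOn μ X Set.univ A π)
    (hπ1 : ∀ᵐ ω ∂μ, π (X ω) < 1) : IsCondExpOn μ X {ω | A ω = 1} D m := by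
  have hA0 : MeasurableSet {ω | A ω = 0} := hA (measurableSet_singleton 0)
  have hcontrol : ∀ᵐ ω ∂μ, A ω = 0 → m' (X ω) = m (X ω) :=
    (ae_restrict_iff' hA0).1 (hm'.ae_eq hX hD hm)
  have hcontrol_prob : IsCondExpOn μ X Set.univ (fun ω => 1 - A ω) (fun x => 1 - π x) :=
    (const 1).sub hX (integrable_const 1) (integrable_of_binary hA hAbin) hπ
  have heverywhere : ∀ᵐ ω ∂μ.restrict Set.univ, m' (X ω) = m (X ω) := by
    refine hcontrol_prob.ae_mem_of_weight_ne_zero hX ?_ (measurableSet_eq_fun hm'.1 hm.1) ?_ <;>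
      rw [Measure.restrict_univ]
    · exact hπ1.mono fun _ hω => (sub_pos.2 hω).ne'
    · filter_upwards [hcontrol] with ω hω hAω
      exact hω ((hAbin ω).resolve_right fun h1 => hAω (by rw [h1, sub_self]))
  rw [Measure.restrict_univ] at heverywhere
  exact hm'_treated.congr_version hm.1 (ae_restrict_of_ae heverywhere)

theorem isCondExpOn_treated_effect (hX : Measurable X) (hA : Measurable A)
    (hAbin : ∀ ω, A ω = 0 ∨ A ω = 1) {π mPT : 𝒳 → ℝ} (hπ : IsCondExpOn μ X Set.univ A π)
    (hπ1 : ∀ᵐ ω ∂μ, π (X ω) < 1) {Y0 Y10 Y11 : Ω → ℝ} (hY0 : Integrable Y0 μ)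
    (hY10 : Integrable Y10 μ) (hY11 : Integrable Y11 μ)
    (hPT1 : IsCondExpOn μ X {ω | A ω = 1} (fun ω => Y10 ω - Y0 ω) mPT)
    (hPT0 : IsCondExpOn μ X {ω | A ω = 0} (fun ω => Y10 ω - Y0 ω) mPT)
    {m11 m10 m01 m00 : 𝒳 → ℝ}
    (hm11 : IsCondExpOn μ X {ω | A ω = 1} Y11 m11) (hm10 : IsCondExpOn μ X {ω | A ω = 0} Y10 m10)
    (hm01 : IsCondExpOn μ X {ω | A ω = 1} Y0 m01) (hm00 : IsCondExpOn μ X {ω | A ω = 0} Y0 m00) :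
    IsCondExpOn μ X {ω | A ω = 1} (fun ω => Y11 ω - Y10 ω)
      (fun x => m11 x - m01 x - m10 x + m00 x) := by
  have htrend : IsCondExpOn μ X {ω | A ω = 1} (fun ω => Y10 ω - Y0 ω) (fun x => m10 x - m00 x) :=
    (hm10.sub hX hY10.integrableOn hY0.integrableOn hm00).treated_of_control hX hA hAbin
      (hY10.sub hY0).integrableOn hPT0 hPT1 hπ hπ1
  have heffect : IsCondExpOn μ X {ω | A ω = 1} (fun ω => Y11 ω - Y0 ω - (Y10 ω - Y0 ω))
      (fun x => m11 x - m01 x - (m10 x - m00 x)) :=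
    (hm11.sub hX hY11.integrableOn hY0.integrableOn hm01).sub hX
      (hY11.sub hY0).integrableOn (hY10.sub hY0).integrableOn htrend
  simp only [sub_sub_sub_cancel_right] at heffect
  simpa only [← sub_add] using heffect

end DifferenceInDifferences

theorem att_identification_MAR_both_periods_general
    {Ω 𝒳 : Type*} [MeasurableSpace Ω] [MeasurableSpace 𝒳]
    (μ : Measure Ω) [IsFiniteMeasure μ]
    (X : Ω → 𝒳) (A R0 R1 Y0 Y10 Y11 Y1 : Ω → ℝ)
    (hX : Measurable X) (hA : Measurable A) (hR0 : Measurable R0) (hR1 : Measurable R1)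
    (hAbin : ∀ ω, A ω = 0 ∨ A ω = 1)
    (hR0bin : ∀ ω, R0 ω = 0 ∨ R0 ω = 1) (hR1bin : ∀ ω, R1 ω = 0 ∨ R1 ω = 1)
    (hY0int : Integrable Y0 μ) (hY10int : Integrable Y10 μ) (hY11int : Integrable Y11 μ)
    (hcons : ∀ ω, Y1 ω = A ω * Y11 ω + (1 - A ω) * Y10 ω)
    (π : 𝒳 → ℝ) (hπ : IsCondExpOn μ X Set.univ A π)
    (hA1pos : 0 < μ {ω | A ω = 1}) (hπ1 : ∀ᵐ ω ∂μ, π (X ω) < 1)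
    (mPT : 𝒳 → ℝ)
    (hPT1 : IsCondExpOn μ X {ω | A ω = 1} (fun ω => Y10 ω - Y0 ω) mPT)
    (hPT0 : IsCondExpOn μ X {ω | A ω = 0} (fun ω => Y10 ω - Y0 ω) mPT)
    (hMAR01 : MissingAtRandomOn μ X {ω | A ω = 1} Y0 R0)
    (hMAR00 : MissingAtRandomOn μ X {ω | A ω = 0} Y0 R0)
    (hMAR11 : MissingAtRandomOn μ X {ω | A ω = 1} Y1 R1)
    (hMAR10 : MissingAtRandomOn μ X {ω | A ω = 0} Y1 R1)
    (m11 m10 m01 m00 : 𝒳 → ℝ)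
    (hm11 : IsCondExpOn μ X ({ω | A ω = 1} ∩ {ω | R1 ω = 1}) Y1 m11)
    (hm10 : IsCondExpOn μ X ({ω | A ω = 0} ∩ {ω | R1 ω = 1}) Y1 m10)
    (hm01 : IsCondExpOn μ X ({ω | A ω = 1} ∩ {ω | R0 ω = 1}) Y0 m01)
    (hm00 : IsCondExpOn μ X ({ω | A ω = 0} ∩ {ω | R0 ω = 1}) Y0 m00) :
    (∫ ω in {ω | A ω = 1}, (Y11 ω - Y10 ω) ∂μ) / (μ {ω | A ω = 1}).toReal
      = ∫ ω, A ω / (∫ ω', A ω' ∂μ)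
          * (m11 (X ω) - m01 (X ω) - m10 (X ω) + m00 (X ω)) ∂μ := by
  have hY1_treated : Y1 =ᵐ[μ.restrict {ω | A ω = 1}] Y11 :=
    (ae_restrict_mem (hA (measurableSet_singleton 1))).mono fun ω (hω : A ω = 1) => by
      simp [hcons, hω]
  have hY1_control : Y1 =ᵐ[μ.restrict {ω | A ω = 0}] Y10 :=
    (ae_restrict_mem (hA (measurableSet_singleton 0))).mono fun ω (hω : A ω = 0) => by
      simp [hcons, hω]
  have h11 : IsCondExpOn μ X {ω | A ω = 1} Y11 m11 :=
    (hMAR11.isCondExpOn_of_observed hX (hY11int.integrableOn.congr hY1_treated.symm) hR1 hR1bin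
      hm11).congr_ae hY1_treated
  have h10 : IsCondExpOn μ X {ω | A ω = 0} Y10 m10 :=
    (hMAR10.isCondExpOn_of_observed hX (hY10int.integrableOn.congr hY1_control.symm) hR1 hR1bin
      hm10).congr_ae hY1_control
  have h01 : IsCondExpOn μ X {ω | A ω = 1} Y0 m01 :=
    hMAR01.isCondExpOn_of_observed hX hY0int.integrableOn hR0 hR0bin hm01
  have h00 : IsCondExpOn μ X {ω | A ω = 0} Y0 m00 :=
    hMAR00.isCondExpOn_of_observed hX hY0int.integrableOn hR0 hR0bin hm00
  have heffect := isCondExpOn_treated_effect hX hA hAbin hπ hπ1 hY0int hY10int hY11int hPT1 hPT0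
    h11 h10 h01 h00
  have hA_integral (f : Ω → ℝ) : ∫ ω, f ω * A ω ∂μ = ∫ ω in {ω | A ω = 1}, f ω ∂μ := by
    simpa using setIntegral_mul_binary (μ := μ) hA hAbin f Set.univ
  have hEA : ∫ ω, A ω ∂μ = (μ {ω | A ω = 1}).toReal := by
    simpa [Measure.real] using hA_integral fun _ => 1
  have hEA_ne : (μ {ω | A ω = 1}).toReal ≠ 0 :=
    (ENNReal.toReal_pos hA1pos.ne' (measure_ne_top _ _)).ne'
  rw [hEA, div_eq_iff hEA_ne, ← integral_mul_const, heffect.setIntegral_eq, ← hA_integral]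
  refine integral_congr_ae (ae_of_all _ fun ω => ?_)
  field_simp

/-- **Identification of the ATT with MAR outcomes in both periods.** Under
conditional parallel trends, consistency, positivity, and MAR for both the pre-
and post-treatment outcomes (`Y_t ⊥ R_t ∣ (X, A)` and `P(R_t=1 ∣ X, A=a) ∈ (0,1)`
a.s. for `t ∈ {0,1}`), the ATT `θ* = E[Y1(1) - Y1(0) ∣ A = 1]` equals
`E[(A/E[A])·(E[Y1∣X,A=1,R1=1] - E[Y0∣X,A=1,R0=1] - E[Y1∣X,A=0,R1=1] + E[Y0∣X,A=0,R0=1])]`. -/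
theorem att_identification_MAR_both_periods
    {Ω 𝒳 : Type*} [MeasurableSpace Ω] [MeasurableSpace 𝒳]
    (μ : Measure Ω) [IsProbabilityMeasure μ]
    (X : Ω → 𝒳) (A R0 R1 Y0 Y10 Y11 Y1 : Ω → ℝ)
    (hX : Measurable X) (hA : Measurable A) (hR0 : Measurable R0) (hR1 : Measurable R1)
    (hY0 : Measurable Y0) (hY10 : Measurable Y10) (hY11 : Measurable Y11)
    (hAbin : ∀ ω, A ω = 0 ∨ A ω = 1)
    (hR0bin : ∀ ω, R0 ω = 0 ∨ R0 ω = 1) (hR1bin : ∀ ω, R1 ω = 0 ∨ R1 ω = 1)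
    (hY0int : Integrable Y0 μ) (hY10int : Integrable Y10 μ) (hY11int : Integrable Y11 μ)
    -- consistency
    (hcons : ∀ ω, Y1 ω = A ω * Y11 ω + (1 - A ω) * Y10 ω)
    -- positivity
    (π : 𝒳 → ℝ)
    (hπ : IsCondExpOn μ X Set.univ A π)
    (hA1pos : 0 < μ {ω | A ω = 1})
    (hπ01 : ∀ᵐ ω ∂μ, 0 < π (X ω) ∧ π (X ω) < 1)
    -- conditional parallel trends, via a common version mPT
    (mPT : 𝒳 → ℝ)
    (hPT1 : IsCondExpOn μ X {ω | A ω = 1} (fun ω => Y10 ω - Y0 ω) mPT)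
    (hPT0 : IsCondExpOn μ X {ω | A ω = 0} (fun ω => Y10 ω - Y0 ω) mPT)
    -- MAR for the pre-treatment outcome: γ0a versions of P(R0=1 ∣ X, A=a),
    -- weak overlap, and Y0 ⊥ R0 ∣ (X, A) via the conditional product rule
    (γ01 γ00 mf01 mf00 : 𝒳 → ℝ)
    (hγ01 : IsCondExpOn μ X {ω | A ω = 1} R0 γ01)
    (hγ00 : IsCondExpOn μ X {ω | A ω = 0} R0 γ00)
    (hγ01ol : ∀ᵐ ω ∂μ, 0 < γ01 (X ω) ∧ γ01 (X ω) < 1)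
    (hγ00ol : ∀ᵐ ω ∂μ, 0 < γ00 (X ω) ∧ γ00 (X ω) < 1)
    (hmf01 : IsCondExpOn μ X {ω | A ω = 1} Y0 mf01)
    (hmf00 : IsCondExpOn μ X {ω | A ω = 0} Y0 mf00)
    (hCI01 : IsCondExpOn μ X {ω | A ω = 1} (fun ω => Y0 ω * R0 ω)
      (fun x => mf01 x * γ01 x))
    (hCI00 : IsCondExpOn μ X {ω | A ω = 0} (fun ω => Y0 ω * R0 ω)
      (fun x => mf00 x * γ00 x))
    -- MAR for the post-treatment outcome: γ1a versions of P(R1=1 ∣ X, A=a),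
    -- weak overlap, and Y1 ⊥ R1 ∣ (X, A) via the conditional product rule
    (γ11 γ10 mf11 mf10 : 𝒳 → ℝ)
    (hγ11 : IsCondExpOn μ X {ω | A ω = 1} R1 γ11)
    (hγ10 : IsCondExpOn μ X {ω | A ω = 0} R1 γ10)
    (hγ11ol : ∀ᵐ ω ∂μ, 0 < γ11 (X ω) ∧ γ11 (X ω) < 1)
    (hγ10ol : ∀ᵐ ω ∂μ, 0 < γ10 (X ω) ∧ γ10 (X ω) < 1)
    (hmf11 : IsCondExpOn μ X {ω | A ω = 1} Y1 mf11)
    (hmf10 : IsCondExpOn μ X {ω | A ω = 0} Y1 mf10)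
    (hCI11 : IsCondExpOn μ X {ω | A ω = 1} (fun ω => Y1 ω * R1 ω)
      (fun x => mf11 x * γ11 x))
    (hCI10 : IsCondExpOn μ X {ω | A ω = 0} (fun ω => Y1 ω * R1 ω)
      (fun x => mf10 x * γ10 x))
    -- observed-data (complete-case) regression functions
    (m11 m10 m01 m00 : 𝒳 → ℝ)
    (hm11 : IsCondExpOn μ X ({ω | A ω = 1} ∩ {ω | R1 ω = 1}) Y1 m11)
    (hm10 : IsCondExpOn μ X ({ω | A ω = 0} ∩ {ω | R1 ω = 1}) Y1 m10)
    (hm01 : IsCondExpOn μ X ({ω | A ω = 1} ∩ {ω | R0 ω = 1}) Y0 m01)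
    (hm00 : IsCondExpOn μ X ({ω | A ω = 0} ∩ {ω | R0 ω = 1}) Y0 m00)
    (hint : Integrable (fun ω =>
      A ω * (m11 (X ω) - m01 (X ω) - m10 (X ω) + m00 (X ω))) μ) :
    (∫ ω in {ω | A ω = 1}, (Y11 ω - Y10 ω) ∂μ) / (μ {ω | A ω = 1}).toReal
      = ∫ ω, A ω / (∫ ω', A ω' ∂μ)
          * (m11 (X ω) - m01 (X ω) - m10 (X ω) + m00 (X ω)) ∂μ := by
  exact att_identification_MAR_both_periods_general μ X A R0 R1 Y0 Y10 Y11 Y1 hX hA hR0 hR1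
    hAbin hR0bin hR1bin hY0int hY10int hY11int hcons π hπ hA1pos (hπ01.mono fun _ h => h.2)
    mPT hPT1 hPT0
    ⟨γ01, mf01, hγ01, ae_restrict_of_ae (hγ01ol.mono fun _ h => h.1), hmf01, hCI01⟩
    ⟨γ00, mf00, hγ00, ae_restrict_of_ae (hγ00ol.mono fun _ h => h.1), hmf00, hCI00⟩
    ⟨γ11, mf11, hγ11, ae_restrict_of_ae (hγ11ol.mono fun _ h => h.1), hmf11, hCI11⟩
    ⟨γ10, mf10, hγ10, ae_restrict_of_ae (hγ10ol.mono fun _ h => h.1), hmf10, hCI10⟩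
    m11 m10 m01 m00 hm11 hm10 hm01 hm00
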